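/- Let β > 0 and let C be a non-circular component of G. Then C is A(β)-harmonic (i.e. ρ(A(β)^C) = 1 and, in case C̄∖C ≠ ∅, ρ(A(β)^{C̄∖C}) < 1) if and only if the following three conditions hold: F(μ) > 0 for every loop μ in C̄; ρ(A(β)^C) = 1; and for every component C' of G contained in C̄∖C there exists β' < β with ρ(A(β')^{C'}) = 1. -/

import Mathlib

open Filter Finset

/-- The spectral radius of a real matrix, `ρ(M) = lim_n ‖Mⁿ‖^{1/n}`
(computed with the entrywise ℓ¹-norm, and as a `limsup` so that it is always defined;
it is `0` for the matrix over the empty index type). -/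
noncomputable def specRad {n : Type*} [Fintype n] [DecidableEq n] (M : Matrix n n ℝ) : ℝ :=
  Filter.limsup (fun k : ℕ => (∑ i, ∑ j, |(M ^ k) i j|) ^ ((1 : ℝ) / (k : ℝ))) Filter.atTop

/-- The spectral radius `ρ(B^S)` of the submatrix of `B` obtained by restricting to `S × S`. -/
noncomputable def specRadOn {V : Type*} [Fintype V] (B : Matrix V V ℝ) (S : Set V) : ℝ :=
  letI : Fintype S := (Set.toFinite S).fintype
  letI : DecidableEq S := Classical.decEq _
  specRad (fun i j : S => B i.1 j.1)

variable {V E : Type*}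

/-- Consecutive edges of the list match up: `r(eᵢ) = s(eᵢ₊₁)`. -/
def ChainOK (src rng : E → V) (μ : List E) : Prop :=
  List.Chain' (fun e f => rng e = src f) μ

/-- A loop: a nonempty path `μ = e₁⋯eₙ` with `s(e₁) = r(eₙ)`. -/
def IsLoop (src rng : E → V) (μ : List E) : Prop :=
  ∃ h : μ ≠ [], ChainOK src rng μ ∧ src (μ.head h) = rng (μ.getLast h)

/-- A loop lying in the vertex set `C`. -/
def LoopIn (src rng : E → V) (C : Set V) (μ : List E) : Prop :=
  IsLoop src rng μ ∧ ∀ e ∈ μ, src e ∈ C ∧ rng e ∈ C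

/-- `v ⤳ w`: there is a (possibly length-0) path from `v` to `w`. -/
def GReaches (src rng : E → V) (v w : V) : Prop :=
  v = w ∨ ∃ μ : List E, ∃ h : μ ≠ [],
    ChainOK src rng μ ∧ src (μ.head h) = v ∧ rng (μ.getLast h) = w

/-- The closure of a set of vertices: all vertices that reach it. -/
def GClosure (src rng : E → V) (C : Set V) : Set V :=
  {v | ∃ w ∈ C, GReaches src rng v w}

/-- A component: an equivalence class of `v ∼ w` (mutual reachability) containing a loop. -/
def GIsComponent (src rng : E → V) (C : Set V) : Prop :=
  (∃ v, C = {w | GReaches src rng v w ∧ GReaches src rng w v}) ∧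
  ∃ μ : List E, LoopIn src rng C μ

/-- The property that the loop `μ` witnesses circularity of the component `C`: `μ` is a simple
loop visiting every vertex of `C`, and containing every edge of the graph joining vertices
of `C`. -/
def CircularWitness (src rng : E → V) (C : Set V) (μ : List E) : Prop :=
  LoopIn src rng C μ ∧ (μ.map src).Nodup ∧
  (∀ v ∈ C, v ∈ μ.map src) ∧
  (∀ e : E, src e ∈ C → rng e ∈ C → e ∈ μ)

/-- A circular component: a component containing, up to the choice of starting vertex,
exactly one loop. -/
def IsCircular (src rng : E → V) (C : Set V) : Prop :=
  GIsComponent src rng C ∧ ∃ μ : List E, CircularWitness src rng C μ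

/-- The matrix `A(β)` with entries `A(β)_{vw} = Σ_{e : v → w} e^{-β F(e)}`. -/
noncomputable def Amat [Fintype E] [DecidableEq V] (src rng : E → V) (F : E → ℝ) (β : ℝ) :
    Matrix V V ℝ :=
  fun v w => ∑ e ∈ Finset.univ.filter (fun e => src e = v ∧ rng e = w), Real.exp (-β * F e)

/-- `F` extended to paths: `F(e₁⋯eₙ) = F(e₁) + ⋯ + F(eₙ)`. -/
def Fpath (F : E → ℝ) (μ : List E) : ℝ := (μ.map F).sum


set_option linter.unusedSectionVars false

section SpecRad

variable {n : Type*} [Fintype n] [DecidableEq n]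

/-- entrywise `ℓ¹`-norm -/
noncomputable def matSum (M : Matrix n n ℝ) : ℝ := ∑ i, ∑ j, |M i j|

theorem matSum_nonneg (M : Matrix n n ℝ) : 0 ≤ matSum M :=
  Finset.sum_nonneg fun _ _ => Finset.sum_nonneg fun _ _ => abs_nonneg _

theorem le_matSum (M : Matrix n n ℝ) (i j : n) : |M i j| ≤ matSum M := by
  refine le_trans ?_ (Finset.single_le_sum (f := fun i => ∑ j, |M i j|)
    (fun _ _ => Finset.sum_nonneg fun _ _ => abs_nonneg _) (Finset.mem_univ i))
  exact Finset.single_le_sum (f := fun j => |M i j|) (fun _ _ => abs_nonneg _) (Finset.mem_univ j)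

theorem row_le_matSum (M : Matrix n n ℝ) (i : n) : ∑ j, |M i j| ≤ matSum M :=
  Finset.single_le_sum (f := fun i => ∑ j, |M i j|)
    (fun _ _ => Finset.sum_nonneg fun _ _ => abs_nonneg _) (Finset.mem_univ i)

theorem matSum_mul_le (M N : Matrix n n ℝ) : matSum (M * N) ≤ matSum M * matSum N := by
  unfold matSum
  rw [Finset.sum_mul]
  refine Finset.sum_le_sum fun i _ => ?_
  calc ∑ j, |(M * N) i j| ≤ ∑ j, ∑ k, |M i k| * |N k j| := by
        refine Finset.sum_le_sum fun j _ => ?_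
        rw [Matrix.mul_apply]
        refine (Finset.abs_sum_le_sum_abs _ _).trans (le_of_eq ?_)
        simp [abs_mul]
    _ = ∑ k, |M i k| * ∑ j, |N k j| := by
        rw [Finset.sum_comm]; simp [Finset.mul_sum]
    _ ≤ ∑ k, |M i k| * (∑ i, ∑ j, |N i j|) := by
        refine Finset.sum_le_sum fun k _ => ?_
        exact mul_le_mul_of_nonneg_left (row_le_matSum N k) (abs_nonneg _)
    _ = _ := by rw [Finset.sum_mul]

theorem matSum_pow_le (M : Matrix n n ℝ) (k : ℕ) : matSum (M ^ (k + 1)) ≤ matSum M ^ (k + 1) := by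
  induction k with
  | zero => simp
  | succ k ih =>
    rw [pow_succ, pow_succ (matSum M)]
    exact (matSum_mul_le _ _).trans (mul_le_mul_of_nonneg_right ih (matSum_nonneg _))

/-- the sequence whose limsup is the spectral radius -/
noncomputable def gseq (M : Matrix n n ℝ) (k : ℕ) : ℝ := matSum (M ^ k) ^ ((1 : ℝ) / (k : ℝ))

theorem specRad_eq (M : Matrix n n ℝ) : specRad M = Filter.limsup (gseq M) atTop := rfl

theorem gseq_nonneg (M : Matrix n n ℝ) (k : ℕ) : 0 ≤ gseq M k :=
  Real.rpow_nonneg (matSum_nonneg _) _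

theorem gseq_le (M : Matrix n n ℝ) {k : ℕ} (hk : 1 ≤ k) : gseq M k ≤ matSum M := by
  obtain ⟨k, rfl⟩ := Nat.exists_eq_add_of_le' hk
  unfold gseq
  calc _ ≤ (matSum M ^ (k + 1)) ^ ((1 : ℝ) / ((k + 1 : ℕ) : ℝ)) :=
        Real.rpow_le_rpow (matSum_nonneg _) (matSum_pow_le M k) (by positivity)
    _ = matSum M := by
        rw [one_div]
        exact Real.pow_rpow_inv_natCast (matSum_nonneg _) (by omega)

theorem gseq_bdd (M : Matrix n n ℝ) : IsBoundedUnder (· ≤ ·) atTop (gseq M) :=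
  isBoundedUnder_of_eventually_le (a := matSum M)
    ((eventually_ge_atTop 1).mono fun _ hk => gseq_le M hk)

theorem gseq_cobdd (M : Matrix n n ℝ) : IsCoboundedUnder (· ≤ ·) atTop (gseq M) :=
  (isBoundedUnder_of_eventually_ge (a := 0)
    (Eventually.of_forall fun k => gseq_nonneg M k)).isCoboundedUnder_le

theorem gseq_pow (M : Matrix n n ℝ) {k : ℕ} (hk : 1 ≤ k) : gseq M k ^ k = matSum (M ^ k) := by
  unfold gseq
  rw [one_div]
  exact Real.rpow_inv_natCast_pow (matSum_nonneg _) (by omega)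

/-- Upper bound on the spectral radius. -/
theorem specRad_le_of (M : Matrix n n ℝ) (K θ : ℝ) (hK : 0 < K) (hθ : 0 ≤ θ)
    (h : ∀ᶠ k : ℕ in atTop, matSum (M ^ k) ≤ K * θ ^ k) : specRad M ≤ θ := by
  rw [specRad_eq]
  have hlim : Tendsto (fun k : ℕ => K ^ ((1 : ℝ) / (k : ℝ)) * θ) atTop (nhds (1 * θ)) := by
    refine Tendsto.mul_const _ ?_
    have h1 : Tendsto (fun k : ℕ => (1 : ℝ) / (k : ℝ)) atTop (nhds 0) :=
      tendsto_one_div_atTop_nhds_zero_nat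
    have := (Real.continuousAt_const_rpow (a := K) (b := 0) hK.ne').tendsto.comp h1
    simpa [Function.comp_def] using this
  rw [one_mul] at hlim
  rw [← hlim.limsup_eq]
  refine limsup_le_limsup ?_ (gseq_cobdd M) hlim.isBoundedUnder_le
  filter_upwards [h, eventually_ge_atTop 1] with k hk hk1
  unfold gseq
  calc _ ≤ (K * θ ^ k) ^ ((1 : ℝ) / (k : ℝ)) :=
        Real.rpow_le_rpow (matSum_nonneg _) hk (by positivity)
    _ = _ := by
        rw [Real.mul_rpow hK.le (by positivity), one_div,
          Real.pow_rpow_inv_natCast hθ (by omega)]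

theorem eventually_matSum_lt (M : Matrix n n ℝ) (r : ℝ) (h : specRad M < r) :
    ∀ᶠ k : ℕ in atTop, matSum (M ^ k) < r ^ k := by
  have := eventually_lt_of_limsup_lt (f := atTop) (u := gseq M) h (gseq_bdd M)
  filter_upwards [this, eventually_ge_atTop 1] with k hk hk1
  rw [← gseq_pow M hk1]
  exact pow_lt_pow_left₀ hk (gseq_nonneg M k) (by omega)

theorem pow_entry_nonneg {M : Matrix n n ℝ} (hM : ∀ i j, 0 ≤ M i j) (k : ℕ) (i j : n) :
    0 ≤ (M ^ k) i j := by
  induction k generalizing i j with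
  | zero => rw [pow_zero, Matrix.one_apply]; split_ifs <;> norm_num
  | succ k ih =>
    rw [pow_succ, Matrix.mul_apply]
    exact Finset.sum_nonneg fun l _ => mul_nonneg (ih _ _) (hM _ _)

theorem pow_add_entry_le {M : Matrix n n ℝ} (hM : ∀ i j, 0 ≤ M i j) (a b : ℕ) (i j l : n) :
    (M ^ a) i j * (M ^ b) j l ≤ (M ^ (a + b)) i l := by
  rw [pow_add, Matrix.mul_apply]
  exact Finset.single_le_sum (f := fun j => (M ^ a) i j * (M ^ b) j l)
    (fun j _ => mul_nonneg (pow_entry_nonneg hM _ _ _) (pow_entry_nonneg hM _ _ _))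
    (Finset.mem_univ j)

theorem pow_mul_diag_le {M : Matrix n n ℝ} (hM : ∀ i j, 0 ≤ M i j) (N k : ℕ) (i : n) :
    ((M ^ N) i i) ^ k ≤ (M ^ (N * k)) i i := by
  induction k with
  | zero => simp
  | succ k ih =>
    rw [pow_succ, Nat.mul_succ]
    exact (mul_le_mul_of_nonneg_right ih (pow_entry_nonneg hM _ _ _)).trans
      (pow_add_entry_le hM _ _ _ _ _)

/-- Lower bound on the spectral radius. -/
theorem le_specRad_of {M : Matrix n n ℝ} (hM : ∀ i j, 0 ≤ M i j) {N : ℕ} (hN : 1 ≤ N) (i : n)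
    (x : ℝ) (hx : 0 ≤ x) (h : x ^ N ≤ (M ^ N) i i) : x ≤ specRad M := by
  rw [specRad_eq]
  refine le_limsup_of_frequently_le ?_ (gseq_bdd M)
  rw [frequently_atTop]
  intro a
  refine ⟨N * (a + 1), by nlinarith, ?_⟩
  have hk : 1 ≤ N * (a + 1) := by nlinarith
  have h1 : x ^ (N * (a + 1)) ≤ gseq M (N * (a + 1)) ^ (N * (a + 1)) := by
    rw [gseq_pow M hk, pow_mul]
    calc _ ≤ ((M ^ N) i i) ^ (a + 1) := pow_le_pow_left₀ (by positivity) h _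
      _ ≤ _ := pow_mul_diag_le hM _ _ _
      _ ≤ _ := (le_abs_self _).trans (le_matSum _ i i)
  exact le_of_pow_le_pow_left₀ (by omega) (gseq_nonneg _ _) h1

theorem one_lt_specRad_of {M : Matrix n n ℝ} (hM : ∀ i j, 0 ≤ M i j) {N : ℕ} (hN : 1 ≤ N) (i : n)
    (h : 1 < (M ^ N) i i) : 1 < specRad M := by
  have h0 : (0 : ℝ) < (M ^ N) i i := by linarith
  have := le_specRad_of hM hN i (((M ^ N) i i) ^ ((N : ℝ)⁻¹)) (by positivity)
    (by rw [Real.rpow_inv_natCast_pow h0.le (by omega)])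
  refine lt_of_lt_of_le ?_ this
  exact Real.one_lt_rpow h (by positivity)

/-- `ρ(M) < 1` iff there is a strictly positive vector with `M u < u`. -/
theorem specRad_lt_one_iff {M : Matrix n n ℝ} (hM : ∀ i j, 0 ≤ M i j) :
    specRad M < 1 ↔ ∃ u : n → ℝ, ∀ i, 0 < u i ∧ ∑ j, M i j * u j < u i := by
  constructor
  · intro h
    obtain ⟨k, hk, hk1⟩ := ((eventually_matSum_lt M 1 h).and (eventually_ge_atTop 1)).exists
    rw [one_pow] at hk
    refine ⟨fun i => ∑ l ∈ Finset.range k, ∑ j, (M ^ l) i j, fun i => ⟨?_, ?_⟩⟩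
    · refine lt_of_lt_of_le one_pos ?_
      refine le_trans ?_ (Finset.single_le_sum (f := fun l => ∑ j, (M ^ l) i j)
        (fun l _ => Finset.sum_nonneg fun j _ => pow_entry_nonneg hM _ _ _)
        (Finset.mem_range.2 (by omega : 0 < k)))
      simp [Matrix.one_apply]
    · have e1 : ∀ l, ∑ j, M i j * ∑ m, (M ^ l) j m = ∑ m, (M ^ (l + 1)) i m := by
        intro l
        simp_rw [pow_succ', Matrix.mul_apply, Finset.mul_sum]
        rw [Finset.sum_comm]
      have e2 : ∑ j, M i j * ∑ l ∈ Finset.range k, ∑ m, (M ^ l) j m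
          = ∑ l ∈ Finset.range k, ∑ m, (M ^ (l + 1)) i m := by
        rw [← Finset.sum_congr rfl (fun l _ => e1 l)]
        simp_rw [Finset.mul_sum (s := Finset.range k)]
        rw [Finset.sum_comm]
      have e3 := Finset.sum_range_succ' (fun l => ∑ m, (M ^ l) i m) k
      have e4 := Finset.sum_range_succ (fun l => ∑ m, (M ^ l) i m) k
      have e5 : ∑ m, (M ^ 0) i m = 1 := by simp [Matrix.one_apply]
      have e6 : ∑ m, (M ^ k) i m < 1 := by
        refine lt_of_le_of_lt ?_ hk
        refine le_trans ?_ (row_le_matSum _ i)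
        exact Finset.sum_le_sum fun _ _ => le_abs_self _
      rw [e2]
      linarith
  · rintro ⟨u, hu⟩
    -- a uniform contraction factor
    have hev : ∀ᶠ θ : ℝ in nhdsWithin 1 (Set.Iio 1), ∀ i, ∑ j, M i j * u j < θ * u i := by
      rw [eventually_all]
      intro i
      have : Tendsto (fun θ : ℝ => θ * u i) (nhds 1) (nhds (1 * u i)) :=
        (continuous_id.mul continuous_const).tendsto 1
      refine (this.mono_left nhdsWithin_le_nhds).eventually_const_lt ?_
      rw [one_mul]; exact (hu i).2
    have hpos : ∀ᶠ θ : ℝ in nhdsWithin 1 (Set.Iio 1), 0 < θ :=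
      nhdsWithin_le_nhds (lt_mem_nhds one_pos)
    obtain ⟨θ, ⟨hθ, hθ0⟩, hθ1⟩ := ((hev.and hpos).and self_mem_nhdsWithin).exists
    refine lt_of_le_of_lt ?_ hθ1
    have hpow : ∀ k i, ∑ j, (M ^ k) i j * u j ≤ θ ^ k * u i := by
      intro k
      induction k with
      | zero => intro i; simp [Matrix.one_apply]
      | succ k ih =>
        intro i
        simp_rw [pow_succ', Matrix.mul_apply, Finset.sum_mul]
        rw [Finset.sum_comm]
        calc ∑ l, ∑ j, M i l * (M ^ k) l j * u j = ∑ l, M i l * ∑ j, (M ^ k) l j * u j := by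
              simp_rw [Finset.mul_sum, mul_assoc]
          _ ≤ ∑ l, M i l * (θ ^ k * u l) :=
              Finset.sum_le_sum fun l _ => mul_le_mul_of_nonneg_left (ih l) (hM _ _)
          _ = θ ^ k * ∑ l, M i l * u l := by
              rw [Finset.mul_sum]; refine Finset.sum_congr rfl fun l _ => by ring
          _ ≤ θ ^ k * (θ * u i) := mul_le_mul_of_nonneg_left (hθ i).le (by positivity)
          _ = _ := by ring
    have hent : ∀ k i j, |(M ^ k) i j| ≤ θ ^ k * (u i / u j) := by
      intro k i j
      rw [abs_of_nonneg (pow_entry_nonneg hM _ _ _), ← mul_div_assoc, le_div_iff₀ (hu j).1]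
      exact (Finset.single_le_sum (f := fun j => (M ^ k) i j * u j)
        (fun j _ => mul_nonneg (pow_entry_nonneg hM _ _ _) (hu j).1.le)
        (Finset.mem_univ j)).trans (hpow k i)
    have hK : 0 ≤ ∑ i, ∑ j, u i / u j :=
      Finset.sum_nonneg fun i _ => Finset.sum_nonneg fun j _ => (div_pos (hu i).1 (hu j).1).le
    refine specRad_le_of M ((∑ i, ∑ j, u i / u j) + 1) θ (by linarith) hθ0.le
      (Eventually.of_forall fun k => ?_)
    calc matSum (M ^ k) ≤ ∑ i, ∑ j, θ ^ k * (u i / u j) :=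
          Finset.sum_le_sum fun i _ => Finset.sum_le_sum fun j _ => hent k i j
      _ = (∑ i, ∑ j, u i / u j) * θ ^ k := by
          simp_rw [← Finset.mul_sum]; ring
      _ ≤ _ := by
          refine mul_le_mul_of_nonneg_right (by linarith) (by positivity)

/-- Comparison used for the strict decrease of the spectral radius. -/
theorem specRad_lt_one_of_conj {M N : Matrix n n ℝ} (hM : ∀ i j, 0 ≤ M i j)
    (hN : ∀ i j, 0 ≤ N i j) (t : ℝ) (ht0 : 0 < t) (ht : t < 1) (d : n → ℝ) (hd : ∀ i, 0 < d i)
    (h : ∀ i j, M i j ≤ t * (d i / d j) * N i j) (hρ : specRad N ≤ 1) : specRad M < 1 := by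
  have hp : ∀ k i j, (M ^ k) i j ≤ t ^ k * (d i / d j) * (N ^ k) i j := by
    intro k
    induction k with
    | zero =>
      intro i j
      simp only [pow_zero, Matrix.one_apply]
      split_ifs with hij
      · subst hij; rw [div_self (hd i).ne']; norm_num
      · simp
    | succ k ih =>
      intro i j
      rw [pow_succ, pow_succ N, Matrix.mul_apply, Matrix.mul_apply, Finset.mul_sum]
      refine Finset.sum_le_sum fun l _ => ?_
      calc _ ≤ (t ^ k * (d i / d l) * (N ^ k) i l) * (t * (d l / d j) * N l j) := by
            refine mul_le_mul (ih i l) (h l j) (hM _ _) ?_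
            have := pow_entry_nonneg hN k i l
            have := hd i
            have := hd l
            positivity
        _ = _ := by
            have := (hd l).ne'
            have := (hd j).ne'
            field_simp
            ring
  have ht2 : 1 < (2 / (1 + t)) := by rw [lt_div_iff₀ (by linarith)]; linarith
  have hK : 0 ≤ ∑ i, ∑ j, d i / d j :=
    Finset.sum_nonneg fun i _ => Finset.sum_nonneg fun j _ => (div_pos (hd i) (hd j)).le
  refine lt_of_le_of_lt (specRad_le_of M ((∑ i, ∑ j, d i / d j) + 1) (t * (2 / (1 + t)))
    (by linarith) (by positivity) ?_) ?_
  · filter_upwards [eventually_matSum_lt N _ (lt_of_le_of_lt hρ ht2)] with k hk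
    calc matSum (M ^ k) ≤ ∑ i, ∑ j, t ^ k * (d i / d j) * (2 / (1 + t)) ^ k := by
          refine Finset.sum_le_sum fun i _ => Finset.sum_le_sum fun j _ => ?_
          rw [abs_of_nonneg (pow_entry_nonneg hM _ _ _)]
          refine (hp k i j).trans (mul_le_mul_of_nonneg_left ?_ ?_)
          · exact ((le_abs_self _).trans (le_matSum _ i j)).trans hk.le
          · have := hd i
            have := hd j
            positivity
      _ = (∑ i, ∑ j, d i / d j) * (t * (2 / (1 + t))) ^ k := by
          simp_rw [← Finset.sum_mul, ← Finset.mul_sum, mul_pow]; ring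
      _ ≤ _ := mul_le_mul_of_nonneg_right (by linarith) (by positivity)
  · rw [← mul_div_assoc, div_lt_one (by linarith)]; linarith

/-! ### Log-convexity -/

/-- nonnegative log-convex functions on the line -/
def LogConv (f : ℝ → ℝ) : Prop :=
  (∀ x, 0 ≤ f x) ∧ ∀ x y a b : ℝ, 0 < a → 0 < b → a + b = 1 →
    f (a * x + b * y) ≤ f x ^ a * f y ^ b

theorem LogConv.zero : LogConv (fun _ => 0) :=
  ⟨fun _ => le_rfl, fun _ _ a b ha hb _ => by simp [Real.zero_rpow ha.ne']⟩

theorem LogConv.exp (c : ℝ) : LogConv (fun x => Real.exp (-x * c)) := by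
  refine ⟨fun _ => (Real.exp_pos _).le, fun x y a b _ _ _ => le_of_eq ?_⟩
  beta_reduce
  rw [← Real.exp_mul, ← Real.exp_mul, ← Real.exp_add]
  congr 1; ring

theorem LogConv.one : LogConv (fun _ => 1) :=
  ⟨fun _ => zero_le_one, fun _ _ a b _ _ _ => by simp⟩

theorem LogConv.mul {f g : ℝ → ℝ} (hf : LogConv f) (hg : LogConv g) :
    LogConv (fun x => f x * g x) := by
  refine ⟨fun x => mul_nonneg (hf.1 x) (hg.1 x), fun x y a b ha hb hab => ?_⟩
  rw [Real.mul_rpow (hf.1 x) (hg.1 x), Real.mul_rpow (hf.1 y) (hg.1 y)]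
  calc _ ≤ (f x ^ a * f y ^ b) * (g x ^ a * g y ^ b) :=
        mul_le_mul (hf.2 x y a b ha hb hab) (hg.2 x y a b ha hb hab) (hg.1 _)
          (mul_nonneg (Real.rpow_nonneg (hf.1 _) _) (Real.rpow_nonneg (hf.1 _) _))
    _ = _ := by ring

theorem holder_two {x₁ x₂ y₁ y₂ a b : ℝ} (hx₁ : 0 ≤ x₁) (hx₂ : 0 ≤ x₂) (hy₁ : 0 ≤ y₁)
    (hy₂ : 0 ≤ y₂) (ha : 0 < a) (hb : 0 < b) (hab : a + b = 1) :
    x₁ ^ a * y₁ ^ b + x₂ ^ a * y₂ ^ b ≤ (x₁ + x₂) ^ a * (y₁ + y₂) ^ b := by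
  rcases (add_nonneg hx₁ hx₂).eq_or_lt with hX | hX
  · have h1 : x₁ = 0 := by linarith
    have h2 : x₂ = 0 := by linarith
    simp [h1, h2, Real.zero_rpow ha.ne']
  rcases (add_nonneg hy₁ hy₂).eq_or_lt with hY | hY
  · have h1 : y₁ = 0 := by linarith
    have h2 : y₂ = 0 := by linarith
    simp [h1, h2, Real.zero_rpow hb.ne']
  have key : ∀ x y : ℝ, 0 ≤ x → 0 ≤ y → x ^ a * y ^ b ≤
      (a * (x / (x₁ + x₂)) + b * (y / (y₁ + y₂))) * ((x₁ + x₂) ^ a * (y₁ + y₂) ^ b) := by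
    intro x y hx hy
    have h := Real.geom_mean_le_arith_mean2_weighted ha.le hb.le
      (div_nonneg hx hX.le) (div_nonneg hy hY.le) hab
    rw [Real.div_rpow hx hX.le, Real.div_rpow hy hY.le] at h
    have hXa : 0 < (x₁ + x₂) ^ a := Real.rpow_pos_of_pos hX _
    have hYb : 0 < (y₁ + y₂) ^ b := Real.rpow_pos_of_pos hY _
    calc _ = x ^ a / (x₁ + x₂) ^ a * (y ^ b / (y₁ + y₂) ^ b)
          * ((x₁ + x₂) ^ a * (y₁ + y₂) ^ b) := by field_simp
      _ ≤ _ := mul_le_mul_of_nonneg_right h (by positivity)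
  calc _ ≤ _ := add_le_add (key x₁ y₁ hx₁ hy₁) (key x₂ y₂ hx₂ hy₂)
    _ = (a * ((x₁ + x₂) / (x₁ + x₂)) + b * ((y₁ + y₂) / (y₁ + y₂)))
          * ((x₁ + x₂) ^ a * (y₁ + y₂) ^ b) := by ring
    _ = _ := by rw [div_self hX.ne', div_self hY.ne', mul_one, mul_one, hab, one_mul]

theorem LogConv.add {f g : ℝ → ℝ} (hf : LogConv f) (hg : LogConv g) :
    LogConv (fun x => f x + g x) := by
  refine ⟨fun x => add_nonneg (hf.1 x) (hg.1 x), fun x y a b ha hb hab => ?_⟩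
  exact (add_le_add (hf.2 x y a b ha hb hab) (hg.2 x y a b ha hb hab)).trans
    (holder_two (hf.1 _) (hg.1 _) (hf.1 _) (hg.1 _) ha hb hab)

theorem LogConv.sum {ι : Type*} (s : Finset ι) {f : ι → ℝ → ℝ} (hf : ∀ i, LogConv (f i)) :
    LogConv (fun x => ∑ i ∈ s, f i x) := by
  classical
  induction s using Finset.induction_on with
  | empty => simpa using LogConv.zero
  | insert i s hi ih =>
    simp_rw [Finset.sum_insert hi]
    exact (hf i).add ih

theorem LogConv.rpow {f : ℝ → ℝ} (hf : LogConv f) {c : ℝ} (hc : 0 ≤ c) :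
    LogConv (fun x => f x ^ c) := by
  refine ⟨fun x => Real.rpow_nonneg (hf.1 x) _, fun x y a b ha hb hab => ?_⟩
  refine (Real.rpow_le_rpow (hf.1 _) (hf.2 x y a b ha hb hab) hc).trans (le_of_eq ?_)
  rw [Real.mul_rpow (Real.rpow_nonneg (hf.1 _) _) (Real.rpow_nonneg (hf.1 _) _),
    ← Real.rpow_mul (hf.1 _), ← Real.rpow_mul (hf.1 _), ← Real.rpow_mul (hf.1 _),
    ← Real.rpow_mul (hf.1 _), mul_comm a, mul_comm b]

theorem LogConv.convex {f : ℝ → ℝ} (hf : LogConv f) {x y a b : ℝ} (ha : 0 < a) (hb : 0 < b)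
    (hab : a + b = 1) : f (a * x + b * y) ≤ a * f x + b * f y :=
  (hf.2 x y a b ha hb hab).trans
    (Real.geom_mean_le_arith_mean2_weighted ha.le hb.le (hf.1 _) (hf.1 _) hab)

theorem LogConv.matpow {M : ℝ → Matrix n n ℝ} (hM : ∀ i j, LogConv (fun x => M x i j)) (k : ℕ)
    (i j : n) : LogConv (fun x => (M x ^ k) i j) := by
  induction k generalizing i j with
  | zero =>
    simp only [pow_zero, Matrix.one_apply]
    split_ifs
    · exact LogConv.one
    · exact LogConv.zero
  | succ k ih =>
    simp_rw [pow_succ, Matrix.mul_apply]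
    exact LogConv.sum _ fun l => (ih i l).mul (hM l j)

theorem LogConv.gseq {M : ℝ → Matrix n n ℝ} (hM : ∀ i j, LogConv (fun x => M x i j)) (k : ℕ) :
    LogConv (fun x => gseq (M x) k) := by
  unfold _root_.gseq matSum
  refine LogConv.rpow ?_ (by positivity)
  refine LogConv.sum _ fun i => LogConv.sum _ fun j => ?_
  have : (fun x => |(M x ^ k) i j|) = fun x => (M x ^ k) i j := by
    funext x; exact abs_of_nonneg ((LogConv.matpow hM k i j).1 x)
  rw [this]
  exact LogConv.matpow hM k i j

theorem specRad_continuous {M : ℝ → Matrix n n ℝ} (hM : ∀ i j, LogConv (fun x => M x i j)) :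
    Continuous (fun x => specRad (M x)) := by
  have hconv : ConvexOn ℝ Set.univ (fun x => specRad (M x)) := by
    rw [convexOn_iff_forall_pos]
    refine ⟨convex_univ, fun x _ y _ a b ha hb hab => ?_⟩
    simp only [smul_eq_mul]
    refine le_of_forall_pos_le_add fun ε hε => ?_
    rw [specRad_eq (M (a * x + b * y))]
    refine limsup_le_of_le (gseq_cobdd _) ?_
    have hx := eventually_lt_of_limsup_lt (f := atTop) (u := _root_.gseq (M x))
      (b := specRad (M x) + ε) (by rw [← specRad_eq]; linarith) (gseq_bdd _)
    have hy := eventually_lt_of_limsup_lt (f := atTop) (u := _root_.gseq (M y))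
      (b := specRad (M y) + ε) (by rw [← specRad_eq]; linarith) (gseq_bdd _)
    filter_upwards [hx, hy] with k hkx hky
    calc _ ≤ a * _root_.gseq (M x) k + b * _root_.gseq (M y) k :=
          (LogConv.gseq hM k).convex ha hb hab
      _ ≤ a * (specRad (M x) + ε) + b * (specRad (M y) + ε) := by gcongr
      _ = a * specRad (M x) + b * specRad (M y) + (a + b) * ε := by ring
      _ = _ := by rw [hab, one_mul]
  rw [← continuousOn_univ]
  exact hconv.continuousOn isOpen_univ

end SpecRad

section Paths

/-- `GPath src rng v μ w`: the edge list `μ` is a path from `v` to `w`. -/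
def GPath (src rng : E → V) : V → List E → V → Prop
  | v, [], w => v = w
  | v, e :: μ, w => src e = v ∧ GPath src rng (rng e) μ w

variable {src rng : E → V}

theorem GPath.append {v w x : V} {μ ν : List E} (h1 : GPath src rng v μ w)
    (h2 : GPath src rng w ν x) : GPath src rng v (μ ++ ν) x := by
  induction μ generalizing v with
  | nil => cases h1; exact h2
  | cons e μ ih => exact ⟨h1.1, ih h1.2⟩

theorem GPath.split {v x : V} {μ ν : List E} (h : GPath src rng v (μ ++ ν) x) :
    ∃ w, GPath src rng v μ w ∧ GPath src rng w ν x := by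
  induction μ generalizing v with
  | nil => exact ⟨v, rfl, h⟩
  | cons e μ ih =>
    obtain ⟨w, h1, h2⟩ := ih h.2
    exact ⟨w, ⟨h.1, h1⟩, h2⟩

theorem chainOK_iff (μ : List E) :
    ChainOK src rng μ ↔ List.IsChain (fun e f => rng e = src f) μ := Iff.rfl

theorem chain_iff_gpath {v w : V} {μ : List E} (h : μ ≠ []) :
    (ChainOK src rng μ ∧ src (μ.head h) = v ∧ rng (μ.getLast h) = w) ↔ GPath src rng v μ w := by
  induction μ generalizing v with
  | nil => exact absurd rfl h
  | cons e μ ih =>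
    cases μ with
    | nil => simp [GPath, chainOK_iff]
    | cons f μ =>
      have := ih (v := rng e) (by simp)
      rw [GPath, ← this]
      simp only [chainOK_iff, List.isChain_cons_cons, List.head_cons, List.getLast_cons_cons]
      constructor
      · rintro ⟨⟨a, b⟩, c, d⟩; exact ⟨c, b, a.symm, d⟩
      · rintro ⟨c, b, a, d⟩; exact ⟨⟨a.symm, b⟩, c, d⟩

theorem greaches_iff {v w : V} : GReaches src rng v w ↔ ∃ μ, GPath src rng v μ w := by
  constructor
  · rintro (rfl | ⟨μ, h, hc⟩)
    · exact ⟨[], rfl⟩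
    · exact ⟨μ, (chain_iff_gpath h).1 hc⟩
  · rintro ⟨μ, h⟩
    by_cases hμ : μ = []
    · subst hμ; exact Or.inl h
    · exact Or.inr ⟨μ, hμ, (chain_iff_gpath hμ).2 h⟩

theorem isLoop_iff {μ : List E} : IsLoop src rng μ ↔ μ ≠ [] ∧ ∃ v, GPath src rng v μ v := by
  constructor
  · rintro ⟨h, hc, hl⟩
    exact ⟨h, _, (chain_iff_gpath h).1 ⟨hc, rfl, hl.symm⟩⟩
  · rintro ⟨h, v, hp⟩
    obtain ⟨a, b, c⟩ := (chain_iff_gpath h).2 hp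
    exact ⟨h, a, b.trans c.symm⟩

theorem greaches_refl (v : V) : GReaches src rng v v := Or.inl rfl

theorem GReaches.trans {u v w : V} (h1 : GReaches src rng u v) (h2 : GReaches src rng v w) :
    GReaches src rng u w := by
  rw [greaches_iff] at *
  obtain ⟨μ, hμ⟩ := h1
  obtain ⟨ν, hν⟩ := h2
  exact ⟨_, hμ.append hν⟩

theorem greaches_edge (e : E) : GReaches src rng (src e) (rng e) :=
  greaches_iff.2 ⟨[e], rfl, rfl⟩

/-- the strongly connected class of a vertex -/
def GClass (src rng : E → V) (v : V) : Set V := {w | GReaches src rng v w ∧ GReaches src rng w v}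

theorem mem_gclass_self (v : V) : v ∈ GClass src rng v := ⟨greaches_refl v, greaches_refl v⟩

theorem gclass_eq {v w : V} (h : w ∈ GClass src rng v) : GClass src rng w = GClass src rng v := by
  ext x
  exact ⟨fun hx => ⟨h.1.trans hx.1, hx.2.trans h.2⟩, fun hx => ⟨h.2.trans hx.1, hx.2.trans h.1⟩⟩

/-- all vertices on a path between two vertices of a class are in the class -/
theorem gpath_in_class {v x y : V} {μ : List E} (h : GPath src rng x μ y)
    (hx : x ∈ GClass src rng v) (hy : y ∈ GClass src rng v) :
    ∀ e ∈ μ, src e ∈ GClass src rng v ∧ rng e ∈ GClass src rng v := by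
  induction μ generalizing x with
  | nil => simp
  | cons f μ ih =>
    obtain ⟨rfl, h2⟩ := h
    have hr : rng f ∈ GClass src rng v :=
      ⟨hx.1.trans (greaches_edge f), (greaches_iff.2 ⟨μ, h2⟩).trans hy.2⟩
    intro e he
    rcases List.mem_cons.1 he with rfl | he
    · exact ⟨hx, hr⟩
    · exact ih h2 hr e he

/-- every edge of a loop is followed by another edge of the loop -/
theorem loop_next {v : V} {μ : List E} (h : GPath src rng v μ v) {f : E} (hf : f ∈ μ) :
    ∃ g ∈ μ, src g = rng f := by
  obtain ⟨a, b, rfl⟩ := List.append_of_mem hf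
  obtain ⟨w, h1, h2⟩ := h.split
  have h3 : GPath src rng (rng f) (b ++ (a ++ [f])) (rng f) :=
    h2.2.append (h1.append ⟨h2.1, rfl⟩)
  rcases hb : b ++ (a ++ [f]) with _ | ⟨g, t⟩
  · simp at hb
  · rw [hb] at h3
    refine ⟨g, ?_, h3.1⟩
    have : g ∈ b ++ (a ++ [f]) := by rw [hb]; simp
    simp only [List.mem_append, List.mem_cons] at this ⊢
    simp at this
    tauto

/-- rotate a loop to start with a given edge -/
theorem loop_rotate {v : V} {μ : List E} (h : GPath src rng v μ v) {f : E} (hf : f ∈ μ) :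
    ∃ π : List E, GPath src rng (rng f) π (src f) ∧ (f :: π).Perm μ := by
  obtain ⟨a, b, rfl⟩ := List.append_of_mem hf
  obtain ⟨w, h1, h2⟩ := h.split
  obtain ⟨rfl, h2⟩ := h2
  exact ⟨b ++ a, h2.append h1, (List.perm_append_comm (l₁ := f :: b) (l₂ := a))⟩

theorem loop_src_class {v : V} {μ : List E} (h : GPath src rng v μ v) {f : E} (hf : f ∈ μ) :
    src f ∈ GClass src rng v :=
  (gpath_in_class h (mem_gclass_self v) (mem_gclass_self v) f hf).1

/-- a list with repeated sources decomposes -/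
theorem not_nodup_split (μ : List E) (h : ¬ (μ.map src).Nodup) :
    ∃ a e b f c, μ = a ++ (e :: b) ++ (f :: c) ∧ src e = src f := by
  induction μ with
  | nil => simp at h
  | cons x l ih =>
    rw [List.map_cons, List.nodup_cons, not_and_or, not_not] at h
    by_cases hm : src x ∈ l.map src
    · obtain ⟨f, hf, hfx⟩ := List.mem_map.1 hm
      obtain ⟨b, c, rfl⟩ := List.append_of_mem hf
      exact ⟨[], x, b, f, c, by simp, hfx.symm⟩
    · obtain ⟨a, e, b, f, c, rfl, hef⟩ := ih (h.resolve_left hm)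
      exact ⟨x :: a, e, b, f, c, by simp, hef⟩

/-- removing a loop from a path -/
theorem gpath_remove {x y : V} {a b c : List E} {e f : E}
    (h : GPath src rng x (a ++ (e :: b) ++ (f :: c)) y) (hef : src e = src f) :
    GPath src rng (src e) (e :: b) (src e) ∧ GPath src rng x (a ++ (f :: c)) y := by
  obtain ⟨w, h1, h2⟩ := h.split
  obtain ⟨z, h3, h4⟩ := h1.split
  obtain rfl : src f = w := h2.1
  obtain rfl : src e = z := h4.1
  refine ⟨?_, h3.append ?_⟩
  · rw [← hef] at h4; exact h4
  · rw [hef]; exact h2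

theorem Fpath_append (F : E → ℝ) (μ ν : List E) : Fpath F (μ ++ ν) = Fpath F μ + Fpath F ν := by
  simp [Fpath]

theorem Fpath_cons (F : E → ℝ) (e : E) (ν : List E) : Fpath F (e :: ν) = F e + Fpath F ν := by
  simp [Fpath]

theorem Fpath_perm (F : E → ℝ) {μ ν : List E} (h : μ.Perm ν) : Fpath F μ = Fpath F ν :=
  (h.map F).sum_eq

/-- a loop with unique out-edges in the class covers the class -/
theorem loop_cover {v x : V} {μ : List E} (hμ : μ ≠ []) (h : GPath src rng x μ x)
    (hx : x ∈ GClass src rng v)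
    (hu : ∀ f ∈ μ, ∀ e, src e = src f → rng e ∈ GClass src rng v → e = f) :
    ∀ w ∈ GClass src rng v, w ∈ μ.map src := by
  have main : ∀ (ν : List E) (z w : V), z ∈ GClass src rng v → w ∈ GClass src rng v →
      z ∈ μ.map src → GPath src rng z ν w → w ∈ μ.map src := by
    intro ν
    induction ν with
    | nil => intro z w _ _ hz hp; cases hp; exact hz
    | cons e ν ih =>
      intro z w hzc hwc hz hp
      have hin := gpath_in_class hp hzc hwc e (by simp)
      obtain ⟨f, hf, hfz⟩ := List.mem_map.1 hz
      have hef : e = f := hu f hf e (by rw [hfz]; exact hp.1) hin.2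
      obtain ⟨g, hg, hgf⟩ := loop_next h hf
      refine ih (rng e) w hin.2 hwc ?_ hp.2
      rw [hef, ← hgf]
      exact List.mem_map_of_mem hg
  intro w hw
  obtain ⟨ν, hν⟩ := greaches_iff.1 (hx.2.trans hw.1)
  refine main ν x w hx hw ?_ hν
  cases μ with
  | nil => exact absurd rfl hμ
  | cons e μ => simp [h.1]

theorem loopIn_iff {v : V} {μ : List E} :
    LoopIn src rng (GClass src rng v) μ ↔
      μ ≠ [] ∧ ∃ x ∈ GClass src rng v, GPath src rng x μ x := by
  constructor
  · rintro ⟨h, hin⟩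
    obtain ⟨h1, x, hx⟩ := isLoop_iff.1 h
    refine ⟨h1, x, ?_, hx⟩
    cases μ with
    | nil => exact absurd rfl h1
    | cons e μ => rw [← hx.1]; exact (hin e (by simp)).1
  · rintro ⟨h1, x, hxc, hx⟩
    exact ⟨isLoop_iff.2 ⟨h1, x, hx⟩, gpath_in_class hx hxc hxc⟩

/-- in a non-circular component every loop has a branching edge -/
theorem exists_branch {v : V} (hC : GIsComponent src rng (GClass src rng v))
    (hnc : ¬ IsCircular src rng (GClass src rng v)) {μ : List E}
    (hμ : LoopIn src rng (GClass src rng v) μ) :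
    ∃ f ∈ μ, ∃ e, src e = src f ∧ rng e ∈ GClass src rng v ∧ e ≠ f := by
  by_contra hcon
  push Not at hcon
  obtain ⟨hne, x, hxc, hx⟩ := loopIn_iff.1 hμ
  have hcov := loop_cover hne hx hxc hcon
  have huniq : ∀ e f, src e ∈ GClass src rng v → src e = src f → rng e ∈ GClass src rng v →
      rng f ∈ GClass src rng v → e = f := by
    intro e f he hef hre hrf
    obtain ⟨g, hg, hge⟩ := List.mem_map.1 (hcov _ he)
    rw [hcon g hg e hge.symm hre, hcon g hg f (hef.symm.trans hge.symm) hrf]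
  -- a shortest loop
  classical
  have hex : ∃ n, ∃ ν, LoopIn src rng (GClass src rng v) ν ∧ ν.length = n := ⟨_, μ, hμ, rfl⟩
  obtain ⟨ν, hν, hlen⟩ := Nat.find_spec hex
  obtain ⟨hνne, y, hyc, hy⟩ := loopIn_iff.1 hν
  apply hnc
  have hcov' := loop_cover hνne hy hyc (fun f hf e hef hre =>
    huniq e f (hef ▸ (hν.2 f hf).1) hef hre (hν.2 f hf).2)
  refine ⟨hC, ν, hν, ?_, hcov', ?_⟩
  · by_contra hnd
    obtain ⟨a, e, b, f, c, rfl, hef⟩ := not_nodup_split ν hnd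
    have hl := (gpath_remove hy hef).1
    have hmin := Nat.find_min' hex ⟨e :: b, loopIn_iff.2 ⟨by simp, src e,
      (hν.2 e (by simp)).1, hl⟩, rfl⟩
    rw [← hlen] at hmin
    simp at hmin
    omega
  · intro e he1 he2
    obtain ⟨f, hf, hfe⟩ := List.mem_map.1 (hcov' _ he1)
    rw [huniq e f he1 hfe.symm he2 (hν.2 f hf).2]
    exact hf

/-- potential function -/
theorem exists_potential [Fintype V] [Fintype E] (F : E → ℝ) (S : Set V)
    (hS : ∀ μ : List E, LoopIn src rng S μ → 0 < Fpath F μ) :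
    ∃ c : ℝ, 0 < c ∧ ∃ h : V → ℝ, ∀ e, src e ∈ S → rng e ∈ S →
      c + h (src e) - h (rng e) ≤ F e := by
  classical
  set N := Fintype.card V with hN
  -- a uniform constant for short loops
  have hc : ∃ c : ℝ, 0 < c ∧ ∀ ν : List E, LoopIn src rng S ν → ν.length ≤ N →
      c * ν.length ≤ Fpath F ν := by
    have hfin : Set.Finite {ν : List E | ν.length ≤ N ∧ LoopIn src rng S ν} :=
      (List.finite_length_le E N).subset fun _ h => h.1
    have hev : ∀ᶠ c : ℝ in nhdsWithin 0 (Set.Ioi 0),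
        ∀ ν ∈ {ν : List E | ν.length ≤ N ∧ LoopIn src rng S ν}, c * ν.length < Fpath F ν := by
      rw [hfin.eventually_all]
      intro ν hν
      have : Tendsto (fun c : ℝ => c * ν.length) (nhds 0) (nhds (0 * ν.length)) :=
        (continuous_id.mul continuous_const).tendsto 0
      refine (this.mono_left nhdsWithin_le_nhds).eventually_lt_const ?_
      rw [zero_mul]; exact hS ν hν.2
    obtain ⟨c, hc, hc0⟩ := (hev.and self_mem_nhdsWithin).exists
    exact ⟨c, hc0, fun ν h1 h2 => (hc ν ⟨h2, h1⟩).le⟩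
  obtain ⟨c, hc0, hc⟩ := hc
  set B := ∑ e, |F e| with hB
  have hB0 : 0 ≤ B := Finset.sum_nonneg fun _ _ => abs_nonneg _
  have hFB : ∀ e, -B ≤ F e := fun e => by
    have := Finset.single_le_sum (f := fun e => |F e|) (fun _ _ => abs_nonneg _)
      (Finset.mem_univ e)
    have h2 := neg_abs_le (F e)
    linarith
  have hshort : ∀ μ : List E, -(B * μ.length) ≤ Fpath F μ := by
    intro μ
    induction μ with
    | nil => simp [Fpath]
    | cons e μ ih =>
      rw [Fpath_cons, List.length_cons]
      push_cast
      have := hFB e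
      linarith
  have hbound : ∀ (n : ℕ) (μ : List E), μ.length = n → ∀ x y, GPath src rng x μ y →
      (∀ e ∈ μ, src e ∈ S ∧ rng e ∈ S) → -((B + c) * N) ≤ Fpath F μ - c * μ.length := by
    intro n
    induction n using Nat.strong_induction_on with
    | _ n ih =>
      intro μ hn x y hp hin
      by_cases hle : μ.length ≤ N
      · have h1 := hshort μ
        have h2 : (μ.length : ℝ) ≤ N := by exact_mod_cast hle
        nlinarith
      · have hnd : ¬ ((μ.take (N + 1)).map src).Nodup := by
          intro hnd
          have := hnd.length_le_card
          rw [List.length_map, List.length_take, ← hN] at this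
          omega
        obtain ⟨a, e, b, f, t, ht, hef⟩ := not_nodup_split _ hnd
        have hlen : (a ++ (e :: b) ++ (f :: t)).length ≤ N + 1 := by
          rw [← ht, List.length_take]; omega
        have hμ : μ = a ++ (e :: b) ++ (f :: (t ++ μ.drop (N + 1))) := by
          conv_lhs => rw [← List.take_append_drop (N + 1) μ, ht]
          simp
        generalize t ++ μ.drop (N + 1) = d at hμ
        subst hμ
        obtain ⟨hl, hr⟩ := gpath_remove hp hef
        have hloop : LoopIn src rng S (e :: b) :=
          ⟨isLoop_iff.2 ⟨by simp, _, hl⟩, fun g hg => hin g (by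
            simp only [List.mem_append]; exact Or.inl (Or.inr hg))⟩
        have h1 := hc (e :: b) hloop (by simp at hlen ⊢; omega)
        have h2 := ih (a ++ f :: d).length (by rw [← hn]; simp) _ rfl x y hr
          (fun g hg => hin g (by
            simp only [List.mem_append] at hg ⊢
            rcases hg with hg | hg
            · exact Or.inl (Or.inl hg)
            · exact Or.inr hg))
        rw [Fpath_append, Fpath_append]
        rw [Fpath_append] at h2
        simp only [List.length_append] at h2 ⊢
        push_cast at h2 ⊢
        linarith
  let T : V → Set ℝ := fun v => {r | ∃ μ : List E, (∃ y, GPath src rng v μ y) ∧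
    (∀ e ∈ μ, src e ∈ S ∧ rng e ∈ S) ∧ r = Fpath F μ - c * μ.length}
  have hTne : ∀ v, (T v).Nonempty := fun v => ⟨_, [], ⟨v, rfl⟩, by simp, rfl⟩
  have hTb : ∀ v, BddBelow (T v) := by
    intro v
    refine ⟨-((B + c) * N), ?_⟩
    rintro r ⟨μ, ⟨y, hy⟩, hin, rfl⟩
    exact hbound _ μ rfl v y hy hin
  refine ⟨c, hc0, fun v => sInf (T v), fun e he1 he2 => ?_⟩
  have : sInf (T (src e)) - F e + c ≤ sInf (T (rng e)) := by
    refine le_csInf (hTne _) ?_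
    rintro r ⟨μ, ⟨y, hy⟩, hin, rfl⟩
    have : sInf (T (src e)) ≤ Fpath F (e :: μ) - c * (e :: μ).length := by
      refine csInf_le (hTb _) ⟨e :: μ, ⟨y, rfl, hy⟩, ?_, rfl⟩
      intro g hg
      rcases List.mem_cons.1 hg with rfl | hg
      · exact ⟨he1, he2⟩
      · exact hin g hg
    rw [Fpath_cons, List.length_cons] at this
    push_cast at this
    linarith
  linarith

end Paths

section Mats

variable {src rng : E → V} [Fintype E] [DecidableEq V] {F : E → ℝ} {β : ℝ}

theorem Amat_nonneg (v w : V) : 0 ≤ Amat src rng F β v w :=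
  Finset.sum_nonneg fun _ _ => (Real.exp_pos _).le

theorem edge_le_Amat (e : E) : Real.exp (-β * F e) ≤ Amat src rng F β (src e) (rng e) :=
  Finset.single_le_sum (f := fun e => Real.exp (-β * F e)) (fun _ _ => (Real.exp_pos _).le)
    (by simp)

theorem Amat_eq_zero {v w : V} (h : ∀ e, src e = v → rng e ≠ w) : Amat src rng F β v w = 0 := by
  unfold Amat
  rw [Finset.filter_false_of_mem, Finset.sum_empty]
  rintro e - ⟨h1, h2⟩
  exact h e h1 h2

theorem Amat_logConv (v w : V) : LogConv (fun x => Amat src rng F x v w) :=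
  LogConv.sum _ fun e => LogConv.exp (F e)

/-- submatrix -/
noncomputable def subA (src rng : E → V) (F : E → ℝ) (β : ℝ) (S : Set V) : Matrix S S ℝ :=
  fun i j => Amat src rng F β i.1 j.1

variable {S : Set V}

theorem subA_nonneg (i j : S) : 0 ≤ subA src rng F β S i j := Amat_nonneg _ _

section
variable [Fintype S] [DecidableEq S]

theorem path_le_pow {v w : V} {μ : List E} (h : GPath src rng v μ w) (hv : v ∈ S) (hw : w ∈ S)
    (hin : ∀ e ∈ μ, src e ∈ S ∧ rng e ∈ S) :
    Real.exp (-β * Fpath F μ) ≤ (subA src rng F β S ^ μ.length) ⟨v, hv⟩ ⟨w, hw⟩ := by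
  induction μ generalizing v with
  | nil => cases h; simp [Fpath]
  | cons e μ ih =>
    obtain ⟨rfl, h2⟩ := h
    have hre := (hin e (by simp)).2
    have h3 := ih h2 hre (fun g hg => hin g (by simp [hg]))
    rw [List.length_cons, Nat.add_comm]
    refine le_trans ?_ (pow_add_entry_le subA_nonneg 1 μ.length _ ⟨rng e, hre⟩ _)
    rw [Fpath_cons, mul_add, Real.exp_add, pow_one]
    exact mul_le_mul (edge_le_Amat e) h3 (Real.exp_pos _).le (subA_nonneg _ _)

theorem two_edges_le (e f : E) (hef : e ≠ f) {v : V} (hv : v ∈ S) (he : src e = v) (hf : src f = v)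
    (hre : rng e ∈ S) (hrf : rng f ∈ S) (n : ℕ) :
    Real.exp (-β * F e) * (subA src rng F β S ^ n) ⟨rng e, hre⟩ ⟨v, hv⟩
      + Real.exp (-β * F f) * (subA src rng F β S ^ n) ⟨rng f, hrf⟩ ⟨v, hv⟩
      ≤ (subA src rng F β S ^ (n + 1)) ⟨v, hv⟩ ⟨v, hv⟩ := by
  classical
  have hn := fun i => pow_entry_nonneg (subA_nonneg (src := src) (rng := rng) (F := F) (β := β)
    (S := S)) n i ⟨v, hv⟩
  rw [pow_succ', Matrix.mul_apply]
  have h1 : ∀ i : S, (if rng e = i.1 then Real.exp (-β * F e) else 0)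
      + (if rng f = i.1 then Real.exp (-β * F f) else 0) ≤ subA src rng F β S ⟨v, hv⟩ i := by
    intro i
    have h2 : ∑ g ∈ ({e, f} : Finset E), (if src g = v ∧ rng g = i.1 then Real.exp (-β * F g) else 0)
        ≤ subA src rng F β S ⟨v, hv⟩ i := by
      unfold subA Amat
      rw [Finset.sum_filter]
      refine Finset.sum_le_sum_of_subset_of_nonneg (Finset.subset_univ _) fun g _ _ => ?_
      split_ifs
      · exact (Real.exp_pos _).le
      · exact le_rfl
    rw [Finset.sum_pair hef] at h2
    simpa [he, hf] using h2
  calc _ = ∑ i : S, ((if rng e = i.1 then Real.exp (-β * F e) else 0)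
      + (if rng f = i.1 then Real.exp (-β * F f) else 0))
        * (subA src rng F β S ^ n) i ⟨v, hv⟩ := by
        simp_rw [add_mul, Finset.sum_add_distrib]
        congr 1
        · rw [Finset.sum_eq_single ⟨rng e, hre⟩]
          · simp
          · intro b _ hb
            rw [if_neg (fun h => hb (Subtype.ext h.symm)), zero_mul]
          · simp
        · rw [Finset.sum_eq_single ⟨rng f, hrf⟩]
          · simp
          · intro b _ hb
            rw [if_neg (fun h => hb (Subtype.ext h.symm)), zero_mul]
          · simp
    _ ≤ _ := Finset.sum_le_sum fun i _ => mul_le_mul_of_nonneg_right (h1 i) (hn i)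

end

variable [Fintype V]

theorem specRadOn_eq (S : Set V) [i1 : Fintype S] [i2 : DecidableEq S] :
    specRadOn (Amat src rng F β) S = specRad (subA src rng F β S) := by
  unfold specRadOn
  have e1 : (Set.toFinite S).fintype = i1 := Subsingleton.elim _ _
  have e2 : (Classical.decEq S) = i2 := Subsingleton.elim _ _
  rw [e1, e2]
  rfl

open Classical in
theorem specRadOn_lt_one_iff (S : Set V) :
    specRadOn (Amat src rng F β) S < 1 ↔ ∃ u : V → ℝ, ∀ v ∈ S, 0 < u v ∧
      ∑ w, (if w ∈ S then Amat src rng F β v w * u w else 0) < u v := by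
  rw [specRadOn_eq, specRad_lt_one_iff subA_nonneg]
  have key : ∀ (u : V → ℝ) (v : V), ∑ w, (if w ∈ S then Amat src rng F β v w * u w else 0)
      = ∑ w : S, Amat src rng F β v w.1 * u w.1 := by
    intro u v
    rw [← Finset.sum_filter]
    exact Finset.sum_subtype _ (by simp) _
  constructor
  · rintro ⟨u, hu⟩
    refine ⟨fun v => if h : v ∈ S then u ⟨v, h⟩ else 0, fun v hv => ?_⟩
    rw [key]
    simpa [hv, subA] using hu ⟨v, hv⟩
  · rintro ⟨u, hu⟩
    refine ⟨fun v => u v.1, fun v => ?_⟩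
    have := hu v.1 v.2
    rw [key] at this
    exact this

theorem specRadOn_mono {S T : Set V} (hST : S ⊆ T) (h : specRadOn (Amat src rng F β) T < 1) :
    specRadOn (Amat src rng F β) S < 1 := by
  classical
  rw [specRadOn_lt_one_iff] at *
  obtain ⟨u, hu⟩ := h
  refine ⟨u, fun v hv => ⟨(hu v (hST hv)).1, lt_of_le_of_lt ?_ (hu v (hST hv)).2⟩⟩
  refine Finset.sum_le_sum fun w _ => ?_
  by_cases hw : w ∈ S
  · simp [hw, hST hw]
  · by_cases hw' : w ∈ T
    · simp only [hw, hw', if_true, if_false]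
      exact mul_nonneg (Amat_nonneg _ _) (hu w hw').1.le
    · simp [hw, hw']

theorem one_le_specRadOn_of_loop {μ : List E} (h : LoopIn src rng S μ) (hF : β * Fpath F μ ≤ 0) :
    1 ≤ specRadOn (Amat src rng F β) S := by
  classical
  obtain ⟨hne, x, hx⟩ := isLoop_iff.1 h.1
  have hxS : x ∈ S := by
    cases μ with
    | nil => exact absurd rfl hne
    | cons e μ => rw [← hx.1]; exact (h.2 e (by simp)).1
  rw [specRadOn_eq]
  refine le_specRad_of subA_nonneg (N := μ.length) (List.length_pos_iff.2 hne) ⟨x, hxS⟩ 1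
    zero_le_one ?_
  rw [one_pow]
  refine le_trans ?_ (path_le_pow hx hxS hxS h.2)
  rw [Real.one_le_exp_iff]
  linarith

theorem specRadOn_continuous (S : Set V) :
    Continuous (fun x => specRadOn (Amat src rng F x) S) := by
  classical
  simp_rw [specRadOn_eq]
  exact specRad_continuous fun i j => Amat_logConv _ _

/-- strict decrease -/
theorem specRadOn_lt_one_of_lt (hS : ∀ μ : List E, LoopIn src rng S μ → 0 < Fpath F μ)
    {β' : ℝ} (hβ : β' < β) (h : specRadOn (Amat src rng F β') S = 1) :
    specRadOn (Amat src rng F β) S < 1 := by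
  classical
  obtain ⟨c, hc, p, hp⟩ := exists_potential F S hS
  rw [specRadOn_eq] at *
  refine specRad_lt_one_of_conj subA_nonneg (subA_nonneg (src := src) (rng := rng) (F := F)
    (β := β')) (Real.exp (-(β - β') * c)) (Real.exp_pos _) ?_
    (fun v => Real.exp (-(β - β') * p v.1)) (fun _ => Real.exp_pos _) ?_ h.le
  · rw [Real.exp_lt_one_iff]; nlinarith
  · rintro ⟨i, hi⟩ ⟨j, hj⟩
    unfold subA Amat
    rw [Finset.mul_sum]
    refine Finset.sum_le_sum fun e he => ?_
    obtain ⟨h1, h2⟩ := (Finset.mem_filter.1 he).2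
    simp only at h1 h2
    have := hp e (h1 ▸ hi) (h2 ▸ hj)
    rw [h1, h2] at this
    rw [← Real.exp_sub, ← Real.exp_add, ← Real.exp_add]
    refine Real.exp_le_exp.2 ?_
    have h3 := mul_le_mul_of_nonneg_left this (sub_nonneg.2 hβ.le)
    nlinarith

/-- positive powers inside a class -/
theorem one_lt_of_branch {v : V} {μ : List E} (hβ : 0 < β)
    (hμ : LoopIn src rng (GClass src rng v) μ) (hF : Fpath F μ ≤ 0)
    {f e : E} (hf : f ∈ μ) (hef : src e = src f) (hre : rng e ∈ GClass src rng v) (hne : e ≠ f) :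
    1 < specRadOn (Amat src rng F β) (GClass src rng v) := by
  classical
  set S := GClass src rng v with hSdef
  obtain ⟨hμne, x, hxc, hx⟩ := loopIn_iff.1 hμ
  obtain ⟨π, hπ, hperm⟩ := loop_rotate hx hf
  have hfS : src f ∈ S := (hμ.2 f hf).1
  have hrfS : rng f ∈ S := (hμ.2 f hf).2
  obtain ⟨ν, hν⟩ := greaches_iff.1 (hre.2.trans hfS.1)
  set M := subA src rng F β S with hM
  have hM0 : ∀ i j, 0 ≤ M i j := subA_nonneg
  have hpf := path_le_pow (F := F) (β := β) hπ hrfS hfS (gpath_in_class hπ hrfS hfS)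
  have hpe := path_le_pow (F := F) (β := β) hν hre hfS (gpath_in_class hν hre hfS)
  rw [← hM] at hpf hpe
  set z : S := ⟨src f, hfS⟩ with hz
  have hFf : 1 ≤ Real.exp (-β * F f) * Real.exp (-β * Fpath F π) := by
    rw [← Real.exp_add, Real.one_le_exp_iff, ← mul_add, ← Fpath_cons, Fpath_perm F hperm]
    nlinarith
  have hedge : ∀ (g : E) (hg : src g = src f) (hrg : rng g ∈ S),
      Real.exp (-β * F g) ≤ M z ⟨rng g, hrg⟩ := by
    intro g hg hrg
    have := edge_le_Amat (src := src) (rng := rng) (F := F) (β := β) g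
    rw [hg] at this
    exact this
  have hdf : 1 ≤ (M ^ (1 + π.length)) z z := by
    refine le_trans (hFf.trans ?_) (pow_add_entry_le hM0 1 π.length z ⟨rng f, hrfS⟩ z)
    rw [pow_one]
    exact mul_le_mul (hedge f rfl hrfS) hpf (Real.exp_pos _).le (hM0 _ _)
  have hde : 0 < (M ^ (1 + ν.length)) z z := by
    refine lt_of_lt_of_le ?_ (pow_add_entry_le hM0 1 ν.length z ⟨rng e, hre⟩ z)
    rw [pow_one]
    exact mul_pos ((Real.exp_pos _).trans_le (hedge e hef hre)) ((Real.exp_pos _).trans_le hpe)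
  have hn : ∃ n, n = π.length + (1 + π.length) * ν.length ∧
      n = ν.length + (1 + ν.length) * π.length := ⟨_, rfl, by ring⟩
  obtain ⟨n, hn1, hn2⟩ := hn
  have hA : Real.exp (-β * Fpath F π) ≤ (M ^ n) ⟨rng f, hrfS⟩ z := by
    rw [hn1]
    refine le_trans ?_ (pow_add_entry_le hM0 _ _ _ z _)
    have h1 : 1 ≤ (M ^ ((1 + π.length) * ν.length)) z z :=
      (one_le_pow₀ hdf).trans (pow_mul_diag_le hM0 _ _ _)
    have := (Real.exp_pos (-β * Fpath F π)).trans_le hpf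
    nlinarith
  have hB : 0 < (M ^ n) ⟨rng e, hre⟩ z := by
    rw [hn2]
    refine lt_of_lt_of_le ?_ (pow_add_entry_le hM0 _ _ _ z _)
    exact mul_pos ((Real.exp_pos _).trans_le hpe)
      (lt_of_lt_of_le (pow_pos hde _) (pow_mul_diag_le hM0 _ _ _))
  have hfin := two_edges_le (F := F) (β := β) e f hne hfS hef rfl hre hrfS n
  rw [← hM] at hfin
  rw [specRadOn_eq]
  refine one_lt_specRad_of hM0 (N := n + 1) (by omega) z (lt_of_lt_of_le ?_ hfin)
  have h1 := mul_pos (Real.exp_pos (-β * F e)) hB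
  have h2 := mul_le_mul_of_nonneg_left hA (Real.exp_pos (-β * F f)).le
  linarith

/-- block-triangular decomposition -/
theorem specRadOn_lt_one_of_classes (S : Set V)
    (hS : ∀ v ∈ S, GClass src rng v ⊆ S)
    (h : ∀ v ∈ S, specRadOn (Amat src rng F β) (GClass src rng v) < 1) :
    specRadOn (Amat src rng F β) S < 1 := by
  classical
  have hch : ∀ D : Set V, ∃ u : V → ℝ, (∃ v ∈ S, D = GClass src rng v) → ∀ v ∈ D, 0 < u v ∧
      ∑ w, (if w ∈ D then Amat src rng F β v w * u w else 0) < u v := by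
    intro D
    by_cases hD : ∃ v ∈ S, D = GClass src rng v
    · obtain ⟨v, hv, rfl⟩ := hD
      obtain ⟨u, hu⟩ := (specRadOn_lt_one_iff _).1 (h v hv)
      exact ⟨u, fun _ => hu⟩
    · exact ⟨0, fun h => absurd h hD⟩
  choose U hU using hch
  let y : V → ℝ := fun v => U (GClass src rng v) v
  have hy : ∀ v ∈ S, 0 < y v ∧
      ∑ w, (if w ∈ GClass src rng v then Amat src rng F β v w * y w else 0) < y v := by
    intro v hv
    have := hU (GClass src rng v) ⟨v, hv, rfl⟩ v (mem_gclass_self v)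
    refine ⟨this.1, lt_of_le_of_lt (le_of_eq ?_) this.2⟩
    refine Finset.sum_congr rfl fun w _ => ?_
    split_ifs with hw
    · simp only [y, gclass_eq hw]
    · rfl
  let r : V → ℕ := fun v => (Finset.univ.filter fun x => GReaches src rng x v).card
  have hr : ∀ v w, GReaches src rng v w → ¬ GReaches src rng w v → r v < r w := by
    intro v w h1 h2
    refine Finset.card_lt_card ?_
    rw [Finset.ssubset_iff_of_subset]
    · exact ⟨w, by simp [greaches_refl], by simpa using h2⟩
    · intro x hx
      simp only [Finset.mem_filter, Finset.mem_univ, true_and] at hx ⊢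
      exact hx.trans h1
  let m : V → ℝ := fun v => ∑ w, Amat src rng F β v w * |y w|
  have hev : ∀ᶠ ε : ℝ in nhdsWithin 0 (Set.Ioi 0), ∀ v, v ∈ S → ε * m v <
      y v - ∑ w, (if w ∈ GClass src rng v then Amat src rng F β v w * y w else 0) := by
    rw [eventually_all]
    intro v
    by_cases hv : v ∈ S
    · have : Tendsto (fun c : ℝ => c * m v) (nhds 0) (nhds (0 * m v)) :=
        (continuous_id.mul continuous_const).tendsto 0
      refine ((this.mono_left nhdsWithin_le_nhds).eventually_lt_const ?_).mono fun _ h _ => h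
      rw [zero_mul]; linarith [(hy v hv).2]
    · exact Eventually.of_forall fun _ h => absurd h hv
  have hev1 : ∀ᶠ ε : ℝ in nhdsWithin 0 (Set.Ioi 0), ε < 1 :=
    nhdsWithin_le_nhds (gt_mem_nhds one_pos)
  obtain ⟨ε, ⟨hε, hε1⟩, hε0⟩ := ((hev.and hev1).and self_mem_nhdsWithin).exists
  have hε0 : 0 < ε := hε0
  rw [specRadOn_lt_one_iff]
  refine ⟨fun v => ε ^ r v * y v, fun v hv => ⟨mul_pos (pow_pos hε0 _) (hy v hv).1, ?_⟩⟩
  have hterm : ∀ w, (if w ∈ S then Amat src rng F β v w * (ε ^ r w * y w) else 0) ≤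
      ε ^ r v * (if w ∈ GClass src rng v then Amat src rng F β v w * y w else 0)
        + ε ^ r v * (ε * (Amat src rng F β v w * |y w|)) := by
    intro w
    have hA := Amat_nonneg (src := src) (rng := rng) (F := F) (β := β) v w
    have hlast : 0 ≤ ε ^ r v * (ε * (Amat src rng F β v w * |y w|)) := by positivity
    by_cases hwD : w ∈ GClass src rng v
    · have hwS := hS v hv hwD
      have hrw : r w = r v := by
        have : (Finset.univ.filter fun x => GReaches src rng x w)
            = (Finset.univ.filter fun x => GReaches src rng x v) := by
          ext x
          simp only [Finset.mem_filter, Finset.mem_univ, true_and]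
          exact ⟨fun h => h.trans hwD.2, fun h => h.trans hwD.1⟩
        simp only [r, this]
      rw [if_pos hwS, if_pos hwD, hrw]
      nlinarith
    · rw [if_neg hwD, mul_zero, zero_add]
      by_cases hwS : w ∈ S
      · rw [if_pos hwS]
        by_cases hz : ∀ e, src e = v → rng e ≠ w
        · rw [Amat_eq_zero hz]; simp
        · push Not at hz
          obtain ⟨e, rfl, rfl⟩ := hz
          have hlt := hr _ _ (greaches_edge e) (fun h => hwD ⟨greaches_edge e, h⟩)
          have h1 : ε ^ r (rng e) ≤ ε ^ (r (src e) + 1) :=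
            pow_le_pow_of_le_one hε0.le hε1.le hlt
          calc _ ≤ Amat src rng F β (src e) (rng e) * (ε ^ (r (src e) + 1) * |y (rng e)|) := by
                refine mul_le_mul_of_nonneg_left ?_ hA
                exact (mul_le_mul_of_nonneg_left (le_abs_self _) (pow_nonneg hε0.le _)).trans
                  (mul_le_mul_of_nonneg_right h1 (abs_nonneg _))
            _ = _ := by ring
      · rw [if_neg hwS]; exact hlast
  refine lt_of_le_of_lt (Finset.sum_le_sum fun w _ => hterm w) ?_
  rw [Finset.sum_add_distrib, ← Finset.mul_sum, ← Finset.mul_sum, ← Finset.mul_sum, ← mul_add]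
  refine mul_lt_mul_of_pos_left ?_ (pow_pos hε0 _)
  have := hε v hv
  simp only [m] at this
  linarith

end Mats

/-- For `β > 0` and a non-circular component `C`: `C` is `A(β)`-harmonic iff all loops in
`C̄` have `F > 0`, `ρ(A(β)^C) = 1`, and every component `C' ⊆ C̄ ∖ C` satisfies
`ρ(A(β')^{C'}) = 1` for some `β' < β`. -/
theorem isAharmonic_iff_pos_noncircular {V E : Type*} [Fintype V] [DecidableEq V] [Fintype E]
    (src rng : E → V) (F : E → ℝ)
    (β : ℝ) (hβ : 0 < β)
    (C : Set V) (hC : GIsComponent src rng C) (hnc : ¬ IsCircular src rng C) :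
    (specRadOn (Amat src rng F β) C = 1 ∧
      ((GClosure src rng C \ C).Nonempty →
        specRadOn (Amat src rng F β) (GClosure src rng C \ C) < 1)) ↔
    ((∀ μ : List E, LoopIn src rng (GClosure src rng C) μ → 0 < Fpath F μ) ∧
      specRadOn (Amat src rng F β) C = 1 ∧
      (∀ C' : Set V, GIsComponent src rng C' → C' ⊆ GClosure src rng C \ C →
        ∃ β' : ℝ, β' < β ∧ specRadOn (Amat src rng F β') C' = 1)) := by
  classical
  obtain ⟨⟨v, hCv⟩, hCloop⟩ := id hC
  change C = GClass src rng v at hCv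
  subst hCv
  set S := GClosure src rng (GClass src rng v) \ GClass src rng v with hSdef
  have hclos : ∀ {x y : V}, GReaches src rng x y → y ∈ GClosure src rng (GClass src rng v) →
      x ∈ GClosure src rng (GClass src rng v) := by
    rintro x y hxy ⟨w, hw, hyw⟩
    exact ⟨w, hw, hxy.trans hyw⟩
  have hSclass : ∀ x ∈ S, GClass src rng x ⊆ S := by
    rintro x ⟨hx1, hx2⟩ y hy
    refine ⟨hclos hy.2 hx1, fun hyC => hx2 ?_⟩
    rw [← gclass_eq hyC, gclass_eq hy]
    exact mem_gclass_self x
  constructor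
  · rintro ⟨h1, h2⟩
    refine ⟨?_, h1, ?_⟩
    · intro μ hμ
      by_contra hF
      push Not at hF
      obtain ⟨hne, x, hx⟩ := isLoop_iff.1 hμ.1
      have hin := gpath_in_class hx (mem_gclass_self x) (mem_gclass_self x)
      have hxcl : x ∈ GClosure src rng (GClass src rng v) := by
        cases μ with
        | nil => exact absurd rfl hne
        | cons e μ => rw [← hx.1]; exact (hμ.2 e (by simp)).1
      by_cases hxC : x ∈ GClass src rng v
      · have hμC : LoopIn src rng (GClass src rng v) μ := loopIn_iff.2 ⟨hne, x, hxC, hx⟩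
        obtain ⟨f, hf, e, hef, hre, hnef⟩ := exists_branch hC hnc hμC
        exact absurd h1 (one_lt_of_branch hβ hμC hF hf hef hre hnef).ne'
      · have hxS : x ∈ S := ⟨hxcl, hxC⟩
        have hlt := h2 ⟨x, hxS⟩
        have := one_le_specRadOn_of_loop (β := β) (F := F) (S := S) (μ := μ)
          ⟨hμ.1, fun e he => ⟨hSclass x hxS (hin e he).1, hSclass x hxS (hin e he).2⟩⟩
          (by nlinarith)
        linarith
    · intro C' hC' hsub
      obtain ⟨⟨x, hx⟩, ν, hν⟩ := hC'
      have hxS : x ∈ S := hsub (by rw [hx]; exact mem_gclass_self x)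
      have hlt := specRadOn_mono hsub (h2 ⟨x, hxS⟩)
      have h0 : 1 ≤ specRadOn (Amat src rng F 0) C' :=
        one_le_specRadOn_of_loop hν (by simp)
      obtain ⟨b, hb, hb1⟩ := intermediate_value_Icc' hβ.le
        (specRadOn_continuous (src := src) (rng := rng) (F := F) C').continuousOn ⟨hlt.le, h0⟩
      refine ⟨b, lt_of_le_of_ne hb.2 ?_, hb1⟩
      rintro rfl
      simp only at hb1
      linarith
  · rintro ⟨h1, h2, h3⟩
    refine ⟨h2, fun _ => specRadOn_lt_one_of_classes S hSclass fun x hx => ?_⟩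
    by_cases hl : ∃ μ, LoopIn src rng (GClass src rng x) μ
    · obtain ⟨β', hβ', h⟩ := h3 (GClass src rng x) ⟨⟨x, rfl⟩, hl⟩ (hSclass x hx)
      refine specRadOn_lt_one_of_lt (fun μ hμ => h1 μ ⟨hμ.1, fun e he => ?_⟩) hβ' h
      exact ⟨(hSclass x hx (hμ.2 e he).1).1, (hSclass x hx (hμ.2 e he).2).1⟩
    · rw [specRadOn_lt_one_iff]
      refine ⟨fun _ => 1, fun y hy => ⟨one_pos, ?_⟩⟩
      rw [Finset.sum_eq_zero]
      · exact one_pos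
      · intro w _
        split_ifs with hw
        · rw [Amat_eq_zero, zero_mul]
          rintro e rfl rfl
          obtain ⟨π, hπ⟩ := greaches_iff.1 (hw.2.trans hy.1)
          exact hl ⟨e :: π, loopIn_iff.2 ⟨by simp, _, hy, rfl, hπ⟩⟩
        · rfl
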